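/- arXiv:2111.12738 — 4 statements merged into one kernel-verified Lean document; each statement's English description precedes it below -/
import Mathlib

section
/- (Lemma 2, second-term bound, up to second order in the step size.) Let H be a self-adjoint linear operator on 𝓗, let ψ be a unit vector, write E = E_ψ and ⟨H²⟩ = ⟨ψ, H²ψ⟩, and fix ε ∈ [0, √2]. Define c_α = √((1 − |α|)² + 2α(1 − |α|)E + α²⟨H²⟩) for α ∈ [−1, 1], define χ(ψ, ε, δ) as the minimum of (1/c_α) · |(1 + 2δE)(1 − |α| + αE) − 2δ((1 − |α|)E + α⟨H²⟩)| over all α ∈ [−1, 1] satisfying |1 − |α| + αE| ≥ c_α (1 − ε²/2), and let ζ(ψ, ε) := ε² ‖H‖_∞ + 2 · max_{α ∈ [0, min{ε²/2, 1}]} | α E − √(1 − (1 − α)²) · √(Var(H)_ψ) |. Then there exist constants C ≥ 0 and δ₀ > 0 (depending only on H, ψ and ε) such that for all 0 < δ < δ₀ and every unit vector ψ* with B(ψ, ψ*) ≤ ε, one has B̃((I + δ(E − H))ψ, (I + δ(E − H))ψ*) ≤ √(2 + 2δ ζ(ψ, ε) − 2 χ(ψ, ε, δ)) + C δ², where for arbitrary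 (not necessarily normalized) vectors u, v the generalized Bures metric is B̃(u, v) = √(⟨u, u⟩ + ⟨v, v⟩ − 2|⟨u, v⟩|). -/
open scoped InnerProductSpace

/-- The energy `E_ψ = ⟨ψ, Hψ⟩` of a state `ψ` for a Hamiltonian `H`. -/
noncomputable def energy {𝓗 : Type*} [NormedAddCommGroup 𝓗] [InnerProductSpace ℂ 𝓗]
    (H : 𝓗 →L[ℂ] 𝓗) (ψ : 𝓗) : ℝ := (⟪ψ, H ψ⟫_ℂ).re

/-- The second moment `⟨H²⟩ = ⟨ψ, H²ψ⟩`. -/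
noncomputable def secondMoment {𝓗 : Type*} [NormedAddCommGroup 𝓗] [InnerProductSpace ℂ 𝓗]
    (H : 𝓗 →L[ℂ] 𝓗) (ψ : 𝓗) : ℝ := (⟪ψ, H (H ψ)⟫_ℂ).re

/-- The energy variance `Var(H)_ψ = ⟨ψ, H²ψ⟩ − E_ψ²`. -/
noncomputable def energyVar {𝓗 : Type*} [NormedAddCommGroup 𝓗] [InnerProductSpace ℂ 𝓗]
    (H : 𝓗 →L[ℂ] 𝓗) (ψ : 𝓗) : ℝ := secondMoment H ψ - (energy H ψ) ^ 2

/-- `ζ(ψ, ε) = ε²‖H‖_∞ + 2 max_{α ∈ [0, min{ε²/2, 1}]} |α E_ψ − √(1 − (1 − α)²) √(Var(H)_ψ)|`. -/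
noncomputable def zeta {𝓗 : Type*} [NormedAddCommGroup 𝓗] [InnerProductSpace ℂ 𝓗]
    (H : 𝓗 →L[ℂ] 𝓗) (ψ : 𝓗) (ε : ℝ) : ℝ :=
  ε ^ 2 * ‖H‖ +
    2 * sSup ((fun α : ℝ =>
        |α * energy H ψ - Real.sqrt (1 - (1 - α) ^ 2) * Real.sqrt (energyVar H ψ)|) ''
      Set.Icc (0 : ℝ) (min (ε ^ 2 / 2) 1))

/-- `c_α = √((1 − |α|)² + 2α(1 − |α|)E + α²⟨H²⟩)`. -/
noncomputable def cAlpha {𝓗 : Type*} [NormedAddCommGroup 𝓗] [InnerProductSpace ℂ 𝓗]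
    (H : 𝓗 →L[ℂ] 𝓗) (ψ : 𝓗) (α : ℝ) : ℝ :=
  Real.sqrt ((1 - |α|) ^ 2 + 2 * α * (1 - |α|) * energy H ψ + α ^ 2 * secondMoment H ψ)

/-- `χ(ψ, ε, δ)`: the minimum of
`(1/c_α)|(1 + 2δE)(1 − |α| + αE) − 2δ((1 − |α|)E + α⟨H²⟩)|`
over `α ∈ [−1, 1]` with `|1 − |α| + αE| ≥ c_α(1 − ε²/2)`. -/
noncomputable def chi {𝓗 : Type*} [NormedAddCommGroup 𝓗] [InnerProductSpace ℂ 𝓗]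
    (H : 𝓗 →L[ℂ] 𝓗) (ψ : 𝓗) (ε δ : ℝ) : ℝ :=
  sInf ((fun α : ℝ =>
      (1 / cAlpha H ψ α) *
        |(1 + 2 * δ * energy H ψ) * (1 - |α| + α * energy H ψ) -
          2 * δ * ((1 - |α|) * energy H ψ + α * secondMoment H ψ)|) ''
    {α : ℝ | α ∈ Set.Icc (-1 : ℝ) 1 ∧
      cAlpha H ψ α * (1 - ε ^ 2 / 2) ≤ |1 - |α| + α * energy H ψ|})

/-!
The step operator `T = 1 + δ(E − H)` expands the generalized Bures metric by at most its norm,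
because that metric is `‖x − θ y‖` for the phase `θ` aligning `y` with `x`. With `a = |⟪ψ, φ⟫|` and
`σ² = Var(H)_ψ` this gives
`B̃(Tψ, Tφ)² ≤ (2 − 2a)(1 + 2δ(E + ‖H‖)) + O(δ²)`.

On the other side, `(p, q) = t (1 − |α|, α)` are homogeneous coordinates on the real span of `ψ` and
`Hψ`, so `χ` is at most `|a − 2δσ√(1 − a²)|`, the value at the vector whose component along `ψ` is
`a`. When `a ≥ 2δσ√(1 − a²)`, this and the term `α = 1 − a` of `ζ` bound the radicand
`2 + 2δζ − 2χ` from below by the same `(2 − 2a)(1 + 2δ(E + ‖H‖))`. Otherwise `a = O(δ)` and `χ ≤ 0`,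
and it suffices to drop the overlap of `Tψ` and `Tφ`.
-/

lemma exists_mul_eq_one_sub_abs_mul {p q : ℝ} (h : p ≠ 0 ∨ q ≠ 0) :
    ∃ t : ℝ, t ≠ 0 ∧ t * p = 1 - |t * q| ∧ |t * q| ≤ 1 := by
  have hk : 0 < |p| + |q| := by
    rcases h with hp | hq
    · positivity
    · positivity
  obtain ⟨τ, hτ, hτp⟩ : ∃ τ : ℝ, |τ| = 1 ∧ τ * p = |p| := by
    rcases le_total 0 p with hp | hp
    · exact ⟨1, by simp, by simp [abs_of_nonneg hp]⟩
    · exact ⟨-1, by simp, by simp [abs_of_nonpos hp]⟩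
  have habs : |τ / (|p| + |q|) * q| = |q| / (|p| + |q|) := by
    rw [abs_mul, abs_div, hτ, abs_of_pos hk, one_div_mul_eq_div]
  refine ⟨τ / (|p| + |q|), div_ne_zero (abs_ne_zero.mp (by simp [hτ])) hk.ne', ?_, ?_⟩
  · rw [habs, div_mul_eq_mul_div, hτp]
    field_simp
    ring
  · rw [habs, div_le_one hk]
    linarith [abs_nonneg p]

lemma le_sqrt_add_of_sq_le {x b k r : ℝ} (hb : b ≤ √r) (hk : 0 ≤ k)
    (hx : x ^ 2 ≤ r + 2 * k * b) : x ≤ √r + k := by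
  refine abs_le_of_sq_le_sq' ?_ (by positivity) |>.2
  have hr : r ≤ √r ^ 2 := by
    rw [Real.sq_sqrt']
    exact le_max_left r 0
  nlinarith [mul_le_mul_of_nonneg_left hb hk]

section

variable {𝓗 : Type*} [NormedAddCommGroup 𝓗] [InnerProductSpace ℂ 𝓗]

/-- The generalized Bures metric `B̃(u, v)` between vectors that need not be normalized. -/
noncomputable def genBures (u v : 𝓗) : ℝ := √(‖u‖ ^ 2 + ‖v‖ ^ 2 - 2 * ‖⟪u, v⟫_ℂ‖)

lemma genBures_nonneg (u v : 𝓗) : 0 ≤ genBures u v := Real.sqrt_nonneg _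

lemma genBures_le_norm_sub (u v : 𝓗) : genBures u v ≤ ‖u - v‖ := by
  refine Real.sqrt_le_iff.mpr ⟨norm_nonneg _, ?_⟩
  rw [@norm_sub_sq ℂ]
  linarith [RCLike.re_le_norm ⟪u, v⟫_ℂ]

lemma genBures_smul_right {θ : ℂ} (hθ : ‖θ‖ = 1) (u v : 𝓗) :
    genBures u (θ • v) = genBures u v := by
  simp only [genBures, norm_smul, inner_smul_right, norm_mul, hθ, one_mul]

lemma exists_norm_sub_smul_eq_genBures (u v : 𝓗) :
    ∃ θ : ℂ, ‖θ‖ = 1 ∧ ‖u - θ • v‖ = genBures u v := by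
  obtain ⟨θ, hθ, hθuv⟩ := Complex.exists_norm_eq_mul_self ⟪u, v⟫_ℂ
  refine ⟨θ, hθ, ?_⟩
  have hre : RCLike.re ⟪u, θ • v⟫_ℂ = ‖⟪u, v⟫_ℂ‖ := by
    rw [inner_smul_right, ← hθuv]
    exact Complex.ofReal_re _
  rw [← Real.sqrt_sq (norm_nonneg (u - θ • v)), @norm_sub_sq ℂ, hre, norm_smul, hθ, one_mul,
    genBures]
  ring_nf

lemma genBures_map_le (T : 𝓗 →L[ℂ] 𝓗) (u v : 𝓗) :
    genBures (T u) (T v) ≤ ‖T‖ * genBures u v := by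
  obtain ⟨θ, hθ, hθuv⟩ := exists_norm_sub_smul_eq_genBures u v
  calc genBures (T u) (T v) = genBures (T u) (θ • T v) := (genBures_smul_right hθ _ _).symm
    _ ≤ ‖T u - θ • T v‖ := genBures_le_norm_sub _ _
    _ = ‖T (u - θ • v)‖ := by rw [map_sub, map_smul]
    _ ≤ ‖T‖ * genBures u v := hθuv ▸ T.le_opNorm _

lemma sq_genBures_le (u v : 𝓗) : genBures u v ^ 2 ≤ ‖u‖ ^ 2 + ‖v‖ ^ 2 := by
  rw [genBures, Real.sq_sqrt']
  exact max_le (by linarith [norm_nonneg ⟪u, v⟫_ℂ]) (by positivity)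

lemma sq_genBures_of_norm_eq_one {u v : 𝓗} (hu : ‖u‖ = 1) (hv : ‖v‖ = 1) :
    genBures u v ^ 2 = 2 - 2 * ‖⟪u, v⟫_ℂ‖ := by
  have huv : ‖⟪u, v⟫_ℂ‖ ≤ 1 := by simpa [hu, hv] using norm_inner_le_norm (𝕜 := ℂ) u v
  rw [genBures, hu, hv, Real.sq_sqrt (by linarith)]
  ring

lemma abs_energy_le (H : 𝓗 →L[ℂ] 𝓗) (x : 𝓗) : |energy H x| ≤ ‖H‖ * ‖x‖ ^ 2 :=
  calc |energy H x| ≤ ‖⟪x, H x⟫_ℂ‖ := Complex.abs_re_le_norm _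
    _ ≤ ‖x‖ * ‖H x‖ := norm_inner_le_norm _ _
    _ ≤ ‖x‖ * (‖H‖ * ‖x‖) := by gcongr; exact H.le_opNorm x
    _ = ‖H‖ * ‖x‖ ^ 2 := by ring

lemma secondMoment_le (H : 𝓗 →L[ℂ] 𝓗) (x : 𝓗) : secondMoment H x ≤ ‖H‖ ^ 2 * ‖x‖ ^ 2 :=
  calc secondMoment H x ≤ ‖x‖ * ‖H (H x)‖ := re_inner_le_norm (𝕜 := ℂ) _ _
    _ ≤ ‖x‖ * (‖H‖ * (‖H‖ * ‖x‖)) := by gcongr; exact H.le_opNorm_of_le (H.le_opNorm x)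
    _ = ‖H‖ ^ 2 * ‖x‖ ^ 2 := by ring

lemma sqrt_energyVar_le (H : 𝓗 →L[ℂ] 𝓗) {ψ : 𝓗} (hψ : ‖ψ‖ = 1) : √(energyVar H ψ) ≤ ‖H‖ := by
  refine Real.sqrt_le_iff.mpr ⟨norm_nonneg H, ?_⟩
  have hM := secondMoment_le H ψ
  rw [hψ] at hM
  rw [energyVar]
  nlinarith [sq_nonneg (energy H ψ)]

lemma energyVar_nonneg {H : 𝓗 →L[ℂ] 𝓗} (hH : (H : 𝓗 →ₗ[ℂ] 𝓗).IsSymmetric) {ψ : 𝓗}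
    (hψ : ‖ψ‖ = 1) : 0 ≤ energyVar H ψ := by
  have hM : secondMoment H ψ = ‖H ψ‖ ^ 2 := by
    have hsymm : ⟪ψ, H (H ψ)⟫_ℂ = ⟪H ψ, H ψ⟫_ℂ := (hH ψ (H ψ)).symm
    rw [secondMoment, hsymm]
    exact inner_self_eq_norm_sq (𝕜 := ℂ) (H ψ)
  have hE : |energy H ψ| ≤ ‖H ψ‖ :=
    calc |energy H ψ| ≤ ‖⟪ψ, H ψ⟫_ℂ‖ := Complex.abs_re_le_norm _
      _ ≤ ‖ψ‖ * ‖H ψ‖ := norm_inner_le_norm _ _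
      _ = ‖H ψ‖ := by rw [hψ, one_mul]
  rw [energyVar, hM, sub_nonneg]
  exact sq_le_sq' (abs_le.mp hE).1 (abs_le.mp hE).2

/-- The operator `1 + δ(E − H)`, one step of size `δ` of energy-shifted imaginary-time evolution. -/
noncomputable def imagTimeStep (H : 𝓗 →L[ℂ] 𝓗) (E δ : ℝ) : 𝓗 →L[ℂ] 𝓗 :=
  .id ℂ 𝓗 + (δ : ℂ) • ((E : ℂ) • .id ℂ 𝓗 - H)

section StepOperator

variable {H : 𝓗 →L[ℂ] 𝓗} {E : ℝ}

lemma norm_imagTimeStep_apply_sq_le (hE : |E| ≤ ‖H‖) (δ : ℝ) (x : 𝓗) :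
    ‖imagTimeStep H E δ x‖ ^ 2 ≤
      ‖x‖ ^ 2 + 2 * δ * (E * ‖x‖ ^ 2 - energy H x) + 4 * ‖H‖ ^ 2 * δ ^ 2 * ‖x‖ ^ 2 := by
  have hG : ‖(E : ℂ) • x - H x‖ ≤ 2 * ‖H‖ * ‖x‖ :=
    calc ‖(E : ℂ) • x - H x‖ ≤ |E| * ‖x‖ + ‖H x‖ := by
          simpa [norm_smul] using norm_sub_le ((E : ℂ) • x) (H x)
      _ ≤ ‖H‖ * ‖x‖ + ‖H‖ * ‖x‖ := by gcongr; exact H.le_opNorm x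
      _ = 2 * ‖H‖ * ‖x‖ := by ring
  have hcross : RCLike.re ⟪x, (δ : ℂ) • ((E : ℂ) • x - H x)⟫_ℂ =
      δ * (E * ‖x‖ ^ 2 - energy H x) := by
    simp [energy, ← Complex.ofReal_pow]
  calc ‖imagTimeStep H E δ x‖ ^ 2
      = ‖x‖ ^ 2 + 2 * (δ * (E * ‖x‖ ^ 2 - energy H x)) + δ ^ 2 * ‖(E : ℂ) • x - H x‖ ^ 2 := by
        rw [← hcross, ← sq_abs δ, ← mul_pow, ← Real.norm_eq_abs, ← Complex.norm_real, ← norm_smul]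
        exact norm_add_sq (𝕜 := ℂ) _ _
    _ ≤ ‖x‖ ^ 2 + 2 * (δ * (E * ‖x‖ ^ 2 - energy H x)) + δ ^ 2 * (2 * ‖H‖ * ‖x‖) ^ 2 := by gcongr
    _ = _ := by ring

lemma sq_opNorm_imagTimeStep_le (hE : |E| ≤ ‖H‖) {δ : ℝ} (hδ : 0 ≤ δ) :
    ‖imagTimeStep H E δ‖ ^ 2 ≤ 1 + 2 * δ * (E + ‖H‖) + 4 * ‖H‖ ^ 2 * δ ^ 2 := by
  have hEH : 0 ≤ E + ‖H‖ := by linarith [(abs_le.mp hE).1]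
  refine (Real.le_sqrt (norm_nonneg _) (by positivity)).mp ?_
  refine ContinuousLinearMap.opNorm_le_bound _ (Real.sqrt_nonneg _) fun x => ?_
  refine abs_le_of_sq_le_sq' ?_ (by positivity) |>.2
  rw [mul_pow, Real.sq_sqrt (by positivity)]
  have henergy : -(‖H‖ * ‖x‖ ^ 2) ≤ energy H x := (abs_le.mp (abs_energy_le H x)).1
  linarith [norm_imagTimeStep_apply_sq_le hE δ x, mul_le_mul_of_nonneg_left henergy hδ]

lemma sq_genBures_imagTimeStep_le (hE : |E| ≤ ‖H‖) {δ : ℝ} (hδ : 0 ≤ δ) {x y : 𝓗}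
    (hx : ‖x‖ = 1) (hy : ‖y‖ = 1) :
    genBures (imagTimeStep H E δ x) (imagTimeStep H E δ y) ^ 2 ≤
      (1 + 2 * δ * (E + ‖H‖)) * genBures x y ^ 2 + 8 * ‖H‖ ^ 2 * δ ^ 2 * genBures x y := by
  have hb0 := genBures_nonneg x y
  have hb2 : genBures x y ≤ 2 := by
    have h := sq_genBures_le x y
    rw [hx, hy] at h
    nlinarith
  calc genBures (imagTimeStep H E δ x) (imagTimeStep H E δ y) ^ 2
      ≤ (‖imagTimeStep H E δ‖ * genBures x y) ^ 2 :=
        pow_le_pow_left₀ (genBures_nonneg _ _) (genBures_map_le _ x y) 2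
    _ = ‖imagTimeStep H E δ‖ ^ 2 * genBures x y ^ 2 := mul_pow _ _ 2
    _ ≤ (1 + 2 * δ * (E + ‖H‖) + 4 * ‖H‖ ^ 2 * δ ^ 2) * genBures x y ^ 2 := by
        gcongr
        exact sq_opNorm_imagTimeStep_le hE hδ
    _ = (1 + 2 * δ * (E + ‖H‖)) * genBures x y ^ 2 +
        4 * ‖H‖ ^ 2 * δ ^ 2 * genBures x y * genBures x y := by ring
    _ ≤ (1 + 2 * δ * (E + ‖H‖)) * genBures x y ^ 2 +
        4 * ‖H‖ ^ 2 * δ ^ 2 * genBures x y * 2 := by gcongr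
    _ = _ := by ring

lemma sq_genBures_imagTimeStep_le_add {ψ φ : 𝓗} (hψ : ‖ψ‖ = 1) (hφ : ‖φ‖ = 1) {δ : ℝ}
    (hδ : 0 ≤ δ) :
    genBures (imagTimeStep H (energy H ψ) δ ψ) (imagTimeStep H (energy H ψ) δ φ) ^ 2 ≤
      2 + 4 * δ * ‖H‖ + 8 * ‖H‖ ^ 2 * δ ^ 2 := by
  have hEψ : |energy H ψ| ≤ ‖H‖ := by simpa [hψ] using abs_energy_le H ψ
  have hEφ : |energy H φ| ≤ ‖H‖ := by simpa [hφ] using abs_energy_le H φ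
  have hTψ := norm_imagTimeStep_apply_sq_le hEψ δ ψ
  have hTφ := norm_imagTimeStep_apply_sq_le hEψ δ φ
  rw [hψ] at hTψ
  rw [hφ] at hTφ
  have hdiff : energy H ψ - energy H φ ≤ 2 * ‖H‖ := by
    linarith [(abs_le.mp hEψ).2, (abs_le.mp hEφ).1]
  linarith [sq_genBures_le (imagTimeStep H (energy H ψ) δ ψ) (imagTimeStep H (energy H ψ) δ φ),
    mul_le_mul_of_nonneg_left hdiff hδ]

end StepOperator

section ChiZeta

variable {H : 𝓗 →L[ℂ] 𝓗} {ψ : 𝓗} {ε δ a s : ℝ}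

lemma chi_le_of_mem {α : ℝ} (hα : |α| ≤ 1)
    (hc : cAlpha H ψ α * (1 - ε ^ 2 / 2) ≤ |1 - |α| + α * energy H ψ|) :
    chi H ψ ε δ ≤ (1 / cAlpha H ψ α) *
      |(1 + 2 * δ * energy H ψ) * (1 - |α| + α * energy H ψ) -
        2 * δ * ((1 - |α|) * energy H ψ + α * secondMoment H ψ)| := by
  refine csInf_le ⟨0, ?_⟩ ⟨α, ⟨abs_le.mp hα, hc⟩, rfl⟩
  rintro _ ⟨β, -, rfl⟩
  exact mul_nonneg (one_div_nonneg.mpr (Real.sqrt_nonneg _)) (abs_nonneg _)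

-- `p ψ + q Hψ` is a nonzero multiple of `(1 - |α|) ψ + α Hψ` for some `α ∈ [-1, 1]`, and
-- rescaling it changes neither the objective nor the constraint in `chi`.
lemma chi_le_of_homogeneous {p q : ℝ} (hpq : p ≠ 0 ∨ q ≠ 0)
    (hc : √(p ^ 2 + 2 * q * p * energy H ψ + q ^ 2 * secondMoment H ψ) * (1 - ε ^ 2 / 2) ≤
      |p + q * energy H ψ|) :
    chi H ψ ε δ ≤ (1 / √(p ^ 2 + 2 * q * p * energy H ψ + q ^ 2 * secondMoment H ψ)) *
      |(1 + 2 * δ * energy H ψ) * (p + q * energy H ψ) -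
        2 * δ * (p * energy H ψ + q * secondMoment H ψ)| := by
  obtain ⟨t, ht, htp, htq⟩ := exists_mul_eq_one_sub_abs_mul hpq
  have hcAlpha : cAlpha H ψ (t * q) =
      |t| * √(p ^ 2 + 2 * q * p * energy H ψ + q ^ 2 * secondMoment H ψ) := by
    rw [cAlpha, ← htp, ← Real.sqrt_sq_eq_abs, ← Real.sqrt_mul (sq_nonneg t)]
    ring_nf
  have hoverlap : 1 - |t * q| + t * q * energy H ψ = t * (p + q * energy H ψ) := by
    rw [← htp]
    ring
  refine (chi_le_of_mem htq ?_).trans_eq ?_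
  · rw [hcAlpha, hoverlap, abs_mul, mul_assoc]
    gcongr
  · rw [hcAlpha, hoverlap, ← htp,
      show (1 + 2 * δ * energy H ψ) * (t * (p + q * energy H ψ)) -
          2 * δ * (t * p * energy H ψ + t * q * secondMoment H ψ) =
        t * ((1 + 2 * δ * energy H ψ) * (p + q * energy H ψ) -
          2 * δ * (p * energy H ψ + q * secondMoment H ψ)) by ring, abs_mul]
    have ht_abs : |t| ≠ 0 := abs_ne_zero.mpr ht
    field_simp

-- The `α` proportional to `Hψ - E ψ` has `c_α = 0`, so it is admissible in `chi`, and its value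
-- there is `0` because of `1 / 0 = 0`.
lemma chi_nonpos_of_energyVar_eq_zero (hv : energyVar H ψ = 0) : chi H ψ ε δ ≤ 0 := by
  have hnorm : (-energy H ψ) ^ 2 + 2 * 1 * -energy H ψ * energy H ψ +
      1 ^ 2 * secondMoment H ψ = 0 := by
    rw [← hv, energyVar]
    ring
  have h := chi_le_of_homogeneous (H := H) (ψ := ψ) (ε := ε) (δ := δ) (p := -energy H ψ)
    (.inr one_ne_zero) (by rw [hnorm]; simp)
  rwa [hnorm, Real.sqrt_zero, div_zero, zero_mul] at h

lemma chi_le_abs_sub (hv : 0 ≤ energyVar H ψ) (has : a ^ 2 + s ^ 2 = 1) (ha : 0 ≤ a)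
    (hε : 1 - ε ^ 2 / 2 ≤ a) : chi H ψ ε δ ≤ |a - 2 * δ * √(energyVar H ψ) * s| := by
  rcases hv.eq_or_lt with hv | hv
  · exact (chi_nonpos_of_energyVar_eq_zero hv.symm).trans (abs_nonneg _)
  set σ := √(energyVar H ψ) with hσ
  set E := energy H ψ
  have hσ0 : 0 < σ := Real.sqrt_pos.mpr hv
  have hM : secondMoment H ψ = E ^ 2 + σ ^ 2 := by
    rw [hσ, Real.sq_sqrt hv.le, energyVar]
    ring
  -- For symmetric `H`, `(aσ - sE) ψ + s Hψ = σ (a ψ + s e)` where `e = (Hψ - E ψ) / σ` is a unit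
  -- vector orthogonal to `ψ`.
  have hne : a * σ - s * E ≠ 0 ∨ s ≠ 0 := by
    by_contra! h
    have ha0 : a = 0 := by simpa [h.2, hσ0.ne'] using h.1
    simp [ha0, h.2] at has
  have hnorm : √((a * σ - s * E) ^ 2 + 2 * s * (a * σ - s * E) * E + s ^ 2 * secondMoment H ψ) =
      σ := by
    rw [Real.sqrt_eq_iff_mul_self_eq_of_pos hσ0, hM]
    linear_combination (-σ ^ 2) * has
  have hoverlap : a * σ - s * E + s * E = σ * a := by ring
  have hvalue : (1 + 2 * δ * E) * (σ * a) -
      2 * δ * ((a * σ - s * E) * E + s * secondMoment H ψ) = σ * (a - 2 * δ * σ * s) := by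
    rw [hM]
    ring
  have h := chi_le_of_homogeneous (δ := δ) (ε := ε) hne (by
    rw [hnorm, hoverlap, abs_of_nonneg (by positivity)]
    gcongr)
  rwa [hnorm, hoverlap, hvalue, abs_mul, abs_of_pos hσ0, ← mul_assoc,
    one_div_mul_cancel hσ0.ne', one_mul] at h

-- The function `cos θ - 2δσ sin θ` of the angle vanishes at some `θ` with `cos θ ≥ a`.
lemma chi_nonpos_of_overlap_lt (hv : 0 ≤ energyVar H ψ) (hδ : 0 ≤ δ) (has : a ^ 2 + s ^ 2 = 1)
    (ha : 0 ≤ a) (hε : 1 - ε ^ 2 / 2 ≤ a) (hlt : a < 2 * δ * √(energyVar H ψ) * s) :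
    chi H ψ ε δ ≤ 0 := by
  obtain ⟨m, hm⟩ : ∃ m, m = 2 * δ * √(energyVar H ψ) := ⟨_, rfl⟩
  rw [← hm] at hlt
  have hm0 : 0 ≤ m := hm ▸ by positivity
  set r := √(1 + m ^ 2)
  have hr : 0 < r := Real.sqrt_pos.mpr (by positivity)
  have hr2 : r ^ 2 = 1 + m ^ 2 := Real.sq_sqrt (by positivity)
  have hmr : a ≤ m / r := by
    rw [le_div_iff₀ hr]
    refine abs_le_of_sq_le_sq' ?_ hm0 |>.2
    nlinarith [pow_le_pow_left₀ ha hlt.le 2]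
  have h := chi_le_abs_sub (δ := δ) (a := m / r) (s := 1 / r) hv
    (by field_simp; rw [hr2]; ring) (by positivity) (hε.trans hmr)
  rwa [← hm, mul_one_div, sub_self, abs_zero] at h

lemma le_zeta (H : 𝓗 →L[ℂ] 𝓗) (ψ : 𝓗) {α : ℝ} (hα : α ∈ Set.Icc 0 (min (ε ^ 2 / 2) 1)) :
    ε ^ 2 * ‖H‖ + 2 * |α * energy H ψ - √(1 - (1 - α) ^ 2) * √(energyVar H ψ)| ≤
      zeta H ψ ε := by
  rw [zeta]
  gcongr
  exact le_csSup (isCompact_Icc.image (by fun_prop)).bddAbove ⟨α, hα, rfl⟩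

lemma sq_mul_opNorm_le_zeta (H : 𝓗 →L[ℂ] 𝓗) (ψ : 𝓗) (ε : ℝ) : ε ^ 2 * ‖H‖ ≤ zeta H ψ ε := by
  have h := le_zeta H ψ (ε := ε) (Set.left_mem_Icc.mpr (by positivity))
  linarith [abs_nonneg (0 * energy H ψ - √(1 - (1 - 0) ^ 2) * √(energyVar H ψ))]

lemma mul_le_radicand (hv : 0 ≤ energyVar H ψ) (hδ : 0 ≤ δ) (ha : 0 ≤ a) (hs : 0 ≤ s)
    (has : a ^ 2 + s ^ 2 = 1) (hε : 1 - ε ^ 2 / 2 ≤ a)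
    (hle : 2 * δ * √(energyVar H ψ) * s ≤ a) :
    (1 + 2 * δ * (energy H ψ + ‖H‖)) * (2 - 2 * a) ≤
      2 + 2 * δ * zeta H ψ ε - 2 * chi H ψ ε δ := by
  have hchi := chi_le_abs_sub (δ := δ) hv has ha hε
  rw [abs_of_nonneg (by linarith)] at hchi
  have hsqrt : √(1 - (1 - (1 - a)) ^ 2) = s := by
    rw [sub_sub_cancel, ← has, add_sub_cancel_left, Real.sqrt_sq hs]
  have hzeta : (2 - 2 * a) * ‖H‖ + 2 * ((1 - a) * energy H ψ - s * √(energyVar H ψ)) ≤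
      zeta H ψ ε :=
    calc _ ≤ ε ^ 2 * ‖H‖ + 2 * |(1 - a) * energy H ψ - s * √(energyVar H ψ)| := by
          gcongr
          · linarith
          · exact le_abs_self _
      _ ≤ zeta H ψ ε := by
          rw [← hsqrt]
          exact le_zeta H ψ ⟨by nlinarith, le_min (by linarith) (by linarith)⟩
  linarith [mul_le_mul_of_nonneg_left hzeta hδ]

lemma le_radicand_of_overlap_lt (hψ : ‖ψ‖ = 1) (hv : 0 ≤ energyVar H ψ) (hδ : 0 ≤ δ)
    (ha : 0 ≤ a) (hs : 0 ≤ s) (has : a ^ 2 + s ^ 2 = 1) (hε : 1 - ε ^ 2 / 2 ≤ a)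
    (hlt : a < 2 * δ * √(energyVar H ψ) * s) :
    max 2 (2 + 4 * δ * ‖H‖ - 8 * ‖H‖ ^ 2 * δ ^ 2) ≤
      2 + 2 * δ * zeta H ψ ε - 2 * chi H ψ ε δ := by
  have hchi := chi_nonpos_of_overlap_lt hv hδ has ha hε hlt
  have hzeta := sq_mul_opNorm_le_zeta H ψ ε
  have hzeta0 : 0 ≤ zeta H ψ ε := le_trans (by positivity) hzeta
  have ha_le : a ≤ 2 * δ * ‖H‖ :=
    calc a ≤ 2 * δ * √(energyVar H ψ) * s := hlt.le
      _ ≤ 2 * δ * ‖H‖ * 1 := by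
          gcongr
          · exact sqrt_energyVar_le H hψ
          · nlinarith
      _ = 2 * δ * ‖H‖ := mul_one _
  have hzeta_ge : (2 - 4 * δ * ‖H‖) * ‖H‖ ≤ zeta H ψ ε :=
    le_trans (by gcongr; linarith) hzeta
  refine max_le ?_ ?_
  · linarith [mul_nonneg hδ hzeta0]
  · linarith [mul_le_mul_of_nonneg_left hzeta_ge hδ]

end ChiZeta

end

theorem second_term_bound_general {𝓗 : Type*} [NormedAddCommGroup 𝓗] [InnerProductSpace ℂ 𝓗]
    {H : 𝓗 →L[ℂ] 𝓗} {ψ φ : 𝓗} (hψ : ‖ψ‖ = 1) (hv : 0 ≤ energyVar H ψ) {ε δ : ℝ} (hδ : 0 ≤ δ)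
    (hφ : ‖φ‖ = 1) (hB : √(2 - 2 * ‖⟪ψ, φ⟫_ℂ‖) ≤ ε) :
    genBures (imagTimeStep H (energy H ψ) δ ψ) (imagTimeStep H (energy H ψ) δ φ) ≤
      √(2 + 2 * δ * zeta H ψ ε - 2 * chi H ψ ε δ) + 8 * ‖H‖ ^ 2 * δ ^ 2 := by
  set a := ‖⟪ψ, φ⟫_ℂ‖
  have ha0 : 0 ≤ a := norm_nonneg _
  have ha1 : a ≤ 1 := by simpa [hψ, hφ] using norm_inner_le_norm (𝕜 := ℂ) ψ φ
  obtain ⟨s, hs, has⟩ : ∃ s : ℝ, 0 ≤ s ∧ a ^ 2 + s ^ 2 = 1 :=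
    ⟨√(1 - a ^ 2), Real.sqrt_nonneg _, by rw [Real.sq_sqrt (by nlinarith)]; ring⟩
  have hε : 1 - ε ^ 2 / 2 ≤ a := by linarith [(Real.sqrt_le_iff.mp hB).2]
  have hE : |energy H ψ| ≤ ‖H‖ := by simpa [hψ] using abs_energy_le H ψ
  rcases le_or_gt (2 * δ * √(energyVar H ψ) * s) a with hle | hlt
  · have hR := mul_le_radicand hv hδ ha0 hs has hε hle
    rw [← sq_genBures_of_norm_eq_one hψ hφ] at hR
    have hEH : 0 ≤ 2 * δ * (energy H ψ + ‖H‖) :=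
      mul_nonneg (by positivity) (by linarith [(abs_le.mp hE).1])
    have hbR := (le_mul_of_one_le_left (sq_nonneg (genBures ψ φ)) (by linarith)).trans hR
    refine le_sqrt_add_of_sq_le (Real.le_sqrt_of_sq_le hbR) (by positivity) ?_
    have hC : 0 ≤ ‖H‖ ^ 2 * δ ^ 2 * genBures ψ φ := mul_nonneg (by positivity) (genBures_nonneg _ _)
    linarith [sq_genBures_imagTimeStep_le hE hδ hψ hφ]
  · have hR := max_le_iff.mp (le_radicand_of_overlap_lt hψ hv hδ ha0 hs has hε hlt)
    refine le_sqrt_add_of_sq_le (b := 1) (Real.one_le_sqrt.mpr (by linarith)) (by positivity) ?_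
    linarith [sq_genBures_imagTimeStep_le_add (H := H) hψ hφ hδ]

/-- Lemma 2 (second-term bound, up to second order in the step size): for all small `δ > 0`
and every unit vector `ψ*` with `B(ψ, ψ*) ≤ ε`,
`B̃((I + δ(E − H))ψ, (I + δ(E − H))ψ*) ≤ √(2 + 2δζ(ψ, ε) − 2χ(ψ, ε, δ)) + Cδ²`. -/
theorem second_term_bound {𝓗 : Type*} [NormedAddCommGroup 𝓗]
    [InnerProductSpace ℂ 𝓗] [FiniteDimensional ℂ 𝓗]
    (H : 𝓗 →L[ℂ] 𝓗) (hH : ∀ x y : 𝓗, ⟪H x, y⟫_ℂ = ⟪x, H y⟫_ℂ)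
    (ψ : 𝓗) (hψ : ‖ψ‖ = 1) (ε : ℝ) (hε : ε ∈ Set.Icc (0 : ℝ) (Real.sqrt 2)) :
    ∃ C : ℝ, 0 ≤ C ∧ ∃ δ₀ : ℝ, 0 < δ₀ ∧ ∀ δ : ℝ, 0 < δ → δ < δ₀ →
      ∀ ψs : 𝓗, ‖ψs‖ = 1 → Real.sqrt (2 - 2 * ‖⟪ψ, ψs⟫_ℂ‖) ≤ ε →
        Real.sqrt
            (‖ψ + (δ : ℂ) • ((energy H ψ : ℂ) • ψ - H ψ)‖ ^ 2 +
              ‖ψs + (δ : ℂ) • ((energy H ψ : ℂ) • ψs - H ψs)‖ ^ 2 -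
              2 * ‖⟪ψ + (δ : ℂ) • ((energy H ψ : ℂ) • ψ - H ψ),
                    ψs + (δ : ℂ) • ((energy H ψ : ℂ) • ψs - H ψs)⟫_ℂ‖) ≤
          Real.sqrt (2 + 2 * δ * zeta H ψ ε - 2 * chi H ψ ε δ) + C * δ ^ 2 := by
  exact ⟨8 * ‖H‖ ^ 2, by positivity, 1, one_pos, fun δ hδ _ ψs hψs hB =>
    second_term_bound_general hψ (energyVar_nonneg hH hψ) hδ.le hψs hB⟩
end

section
/- (Theorem 2, a posteriori error bound for variational quantum real time evolution.) Let H be a self-adjoint linear operator on 𝓗, let ħ > 0 and T > 0. Let ψ*: [0, T] → 𝓗 be the exact real-time evolution, i.e., the solution of iħ·dψ*_t/dt = Hψ*_t with unit initial state ψ*_0, and let ψ: [0, T] → 𝓗 be a continuously differentiable path of unit vectors with ψ_0 = ψ*_0. Define the gradient error e_t := ψ̇_t + (i/ħ)(H − E_{ψ_t})ψ_t − i·Im⟨ψ_t, ψ̇_t⟩ ψ_t. Then B(ψ*_T, ψ_T) ≤ ∫₀ᵀ ‖e_t‖ dt. -/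
open scoped InnerProductSpace

/-!
The Bures metric ignores phases, so `ψ_t` may be replaced by `exp (-iθ_t) ψ_t` with
`θ̇_t = E_{ψ_t} / ħ + Im ⟨ψ_t, ψ̇_t⟩`. This turns the gradient error into the plain defect
`exp (-iθ_t) e_t` of the Schrödinger equation. Since the generator `-(i/ħ)H` is skew, it does not
contribute to the growth of the distance to the exact solution, which therefore grows at rate at
most `‖e_t‖`; and on unit vectors the norm distance dominates the Bures metric.
-/

open Set MeasureTheory

section RealInnerProductSpace

variable {E : Type*} [NormedAddCommGroup E] [InnerProductSpace ℝ E] {a b : ℝ}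

lemma norm_eq_of_inner_deriv_eq_zero {u u' : ℝ → E} (hab : a ≤ b)
    (hu : ∀ t ∈ Icc a b, HasDerivWithinAt u (u' t) (Icc a b) t)
    (horth : ∀ t ∈ Icc a b, ⟪u t, u' t⟫_ℝ = 0) : ‖u b‖ = ‖u a‖ := by
  have hderiv (t) (ht : t ∈ Icc a b) : HasDerivWithinAt (‖u ·‖ ^ 2) 0 (Icc a b) t := by
    simpa only [horth t ht, mul_zero] using (hu t ht).norm_sq
  have hsq : ‖u b‖ ^ 2 = ‖u a‖ ^ 2 :=
    constant_of_has_deriv_right_zero (fun t ht ↦ (hderiv t ht).continuousWithinAt)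
      (fun t ht ↦ (hderiv t (Ico_subset_Icc_self ht)).mono_of_mem_nhdsWithin
        (Icc_mem_nhdsGE_of_mem ht)) b (right_mem_Icc.mpr hab)
  exact (sq_eq_sq₀ (norm_nonneg _) (norm_nonneg _)).mp hsq

lemma sqrt_norm_sq_add_sub_le_integral_of_inner_deriv_le {u u' : ℝ → E} {k : ℝ → ℝ} {δ : ℝ}
    (hδ : 0 < δ) (hab : a ≤ b) (hu : ∀ t ∈ Icc a b, HasDerivWithinAt u (u' t) (Icc a b) t)
    (hk : IntegrableOn k (Icc a b)) (hk0 : ∀ t ∈ Icc a b, 0 ≤ k t)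
    (hle : ∀ t ∈ Icc a b, ⟪u t, u' t⟫_ℝ ≤ ‖u t‖ * k t) :
    √(‖u b‖ ^ 2 + δ) - √(‖u a‖ ^ 2 + δ) ≤ ∫ t in a..b, k t := by
  have hpos (t) : 0 < ‖u t‖ ^ 2 + δ := by positivity
  have hderiv (t) (ht : t ∈ Icc a b) : HasDerivWithinAt (fun s ↦ √(‖u s‖ ^ 2 + δ))
      (2 * ⟪u t, u' t⟫_ℝ / (2 * √(‖u t‖ ^ 2 + δ))) (Icc a b) t :=
    ((hu t ht).norm_sq.add_const δ).sqrt (hpos t).ne'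
  refine intervalIntegral.sub_le_integral_of_hasDeriv_right_of_le hab
    (fun t ht ↦ (hderiv t ht).continuousWithinAt)
    (fun t ht ↦ (hderiv t (Ioo_subset_Icc_self ht)).mono_of_mem_nhdsWithin
      (Icc_mem_nhdsGT_of_mem (Ioo_subset_Ico_self ht))) hk fun t ht ↦ ?_
  replace ht := Ioo_subset_Icc_self ht
  rw [mul_div_mul_left _ _ two_ne_zero, div_le_iff₀' (Real.sqrt_pos.mpr (hpos t))]
  have hnorm : ‖u t‖ ≤ √(‖u t‖ ^ 2 + δ) := Real.le_sqrt_of_sq_le (by linarith)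
  exact (hle t ht).trans (mul_le_mul_of_nonneg_right hnorm (hk0 t ht))

lemma norm_le_add_integral_of_inner_deriv_le {u u' : ℝ → E} {k : ℝ → ℝ} (hab : a ≤ b)
    (hu : ∀ t ∈ Icc a b, HasDerivWithinAt u (u' t) (Icc a b) t)
    (hk : IntegrableOn k (Icc a b)) (hk0 : ∀ t ∈ Icc a b, 0 ≤ k t)
    (hle : ∀ t ∈ Icc a b, ⟪u t, u' t⟫_ℝ ≤ ‖u t‖ * k t) :
    ‖u b‖ ≤ ‖u a‖ + ∫ t in a..b, k t := by
  -- The norm is not differentiable at `0`, hence the smoothing `√(‖u t‖ ^ 2 + ε ^ 2)`.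
  refine le_of_forall_pos_le_add fun ε hε ↦ ?_
  have hgrowth :=
    sqrt_norm_sq_add_sub_le_integral_of_inner_deriv_le (pow_pos hε 2) hab hu hk hk0 hle
  have hright : ‖u b‖ ≤ √(‖u b‖ ^ 2 + ε ^ 2) := Real.le_sqrt_of_sq_le (by nlinarith)
  have hleft : √(‖u a‖ ^ 2 + ε ^ 2) ≤ ‖u a‖ + ε :=
    Real.sqrt_le_iff.mpr ⟨by positivity, by nlinarith [norm_nonneg (u a)]⟩
  linarith

lemma norm_sub_le_add_integral_of_dissipative {A : ℝ → E → E} {u v f : ℝ → E} (hab : a ≤ b)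
    (hA : ∀ t ∈ Icc a b, ∀ x y, ⟪x - y, A t x - A t y⟫_ℝ ≤ 0)
    (hu : ∀ t ∈ Icc a b, HasDerivWithinAt u (A t (u t)) (Icc a b) t)
    (hv : ∀ t ∈ Icc a b, HasDerivWithinAt v (A t (v t) + f t) (Icc a b) t)
    (hf : IntegrableOn (fun t ↦ ‖f t‖) (Icc a b)) :
    ‖v b - u b‖ ≤ ‖v a - u a‖ + ∫ t in a..b, ‖f t‖ := by
  refine norm_le_add_integral_of_inner_deriv_le (u := v - u) hab
    (fun t ht ↦ (hv t ht).sub (hu t ht)) hf (fun t _ ↦ norm_nonneg _) fun t ht ↦ ?_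
  calc ⟪v t - u t, A t (v t) + f t - A t (u t)⟫_ℝ
      = ⟪v t - u t, A t (v t) - A t (u t)⟫_ℝ + ⟪v t - u t, f t⟫_ℝ := by
        rw [← inner_add_right, add_sub_right_comm]
    _ ≤ 0 + ‖v t - u t‖ * ‖f t‖ := add_le_add (hA t ht _ _) (real_inner_le_norm _ _)
    _ = ‖v t - u t‖ * ‖f t‖ := zero_add _

end RealInnerProductSpace

lemma hasDerivWithinAt_integral_Icc {E : Type*} [NormedAddCommGroup E] [NormedSpace ℝ E]
    [CompleteSpace E] {g : ℝ → E} {a b t : ℝ} (hg : ContinuousOn g (Icc a b))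
    (ht : t ∈ Icc a b) : HasDerivWithinAt (fun s ↦ ∫ x in a..s, g x) (g t) (Icc a b) t := by
  have : Fact (t ∈ Icc a b) := ⟨ht⟩
  exact intervalIntegral.integral_hasDerivWithinAt_right
    ((hg.mono (Icc_subset_Icc_right ht.2)).intervalIntegrable_of_Icc ht.1)
    (hg.stronglyMeasurableAtFilter_nhdsWithin measurableSet_Icc t) (hg t ht)

section Bures

variable {𝕜 E : Type*} [RCLike 𝕜] [NormedAddCommGroup E] [InnerProductSpace 𝕜 E]

variable (𝕜) in
/-- The Bures metric `B(x, y) = √(2 - 2|⟨x, y⟩|)` between unit vectors. -/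
noncomputable def buresDist (x y : E) : ℝ := √(2 - 2 * ‖⟪x, y⟫_𝕜‖)

lemma buresDist_smul_right {c : 𝕜} (hc : ‖c‖ = 1) (x y : E) :
    buresDist 𝕜 x (c • y) = buresDist 𝕜 x y := by
  rw [buresDist, buresDist, inner_smul_right, norm_mul, hc, one_mul]

lemma buresDist_le_norm_sub {x y : E} (hx : ‖x‖ = 1) (hy : ‖y‖ = 1) :
    buresDist 𝕜 x y ≤ ‖x - y‖ := by
  refine Real.sqrt_le_iff.mpr ⟨norm_nonneg _, ?_⟩
  rw [norm_sub_sq (𝕜 := 𝕜), hx, hy]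
  linarith [RCLike.re_le_norm ⟪x, y⟫_𝕜]

end Bures

section Complex

open Complex

variable {𝓗 : Type*} [NormedAddCommGroup 𝓗]

lemma hasDerivWithinAt_cexp_neg_mul_I_smul [NormedSpace ℂ 𝓗] {θ : ℝ → ℝ} {θ' : ℝ}
    {ψ : ℝ → 𝓗} {ψ' : 𝓗} {s : Set ℝ} {t : ℝ} (hθ : HasDerivWithinAt θ θ' s t)
    (hψ : HasDerivWithinAt ψ ψ' s t) :
    HasDerivWithinAt (fun r ↦ cexp ((-θ r : ℝ) * I) • ψ r)
      (cexp ((-θ t : ℝ) * I) • (ψ' - (I * θ') • ψ t)) s t := by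
  have hneg : HasDerivWithinAt (fun r ↦ -θ r) (-θ') s t := hθ.neg
  refine ((hneg.ofReal_comp.mul_const I).cexp.smul hψ).congr_deriv ?_
  push_cast
  module

variable [InnerProductSpace ℂ 𝓗]

theorem buresDist_le_integral_of_skew {A : ℝ → 𝓗 →ₗ[ℂ] 𝓗} {u ψ ψ' : ℝ → 𝓗} {θ θ' : ℝ → ℝ}
    {a b : ℝ} (hab : a ≤ b) (hA : ∀ t ∈ Icc a b, ∀ x, (⟪x, A t x⟫_ℂ).re = 0)
    (hu : ∀ t ∈ Icc a b, HasDerivWithinAt u (A t (u t)) (Icc a b) t)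
    (hψ : ∀ t ∈ Icc a b, HasDerivWithinAt ψ (ψ' t) (Icc a b) t)
    (hθ : ∀ t ∈ Icc a b, HasDerivWithinAt θ (θ' t) (Icc a b) t)
    (hint : IntegrableOn (fun t ↦ ‖ψ' t - A t (ψ t) - (I * θ' t) • ψ t‖) (Icc a b))
    (hθa : θ a = 0) (hinit : ψ a = u a) (hua : ‖u a‖ = 1) (hψb : ‖ψ b‖ = 1) :
    buresDist ℂ (u b) (ψ b) ≤ ∫ t in a..b, ‖ψ' t - A t (ψ t) - (I * θ' t) • ψ t‖ := by
  let _ : InnerProductSpace ℝ 𝓗 := InnerProductSpace.complexToReal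
  set p : ℝ → ℂ := fun t ↦ cexp ((-θ t : ℝ) * I)
  set f : ℝ → 𝓗 := fun t ↦ p t • (ψ' t - A t (ψ t) - (I * θ' t) • ψ t)
  have hp (t) : ‖p t‖ = 1 := norm_exp_ofReal_mul_I _
  have hf (t) : ‖f t‖ = ‖ψ' t - A t (ψ t) - (I * θ' t) • ψ t‖ := by
    rw [norm_smul, hp, one_mul]
  have hrot (t) (ht : t ∈ Icc a b) : HasDerivWithinAt (fun s ↦ p s • ψ s)
      (A t (p t • ψ t) + f t) (Icc a b) t := by
    refine (hasDerivWithinAt_cexp_neg_mul_I_smul (hθ t ht) (hψ t ht)).congr_deriv ?_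
    simp only [p, f, map_smul]
    module
  have hdiss (t) (ht : t ∈ Icc a b) (x y : 𝓗) : ⟪x - y, A t x - A t y⟫_ℝ ≤ 0 := by
    rw [← map_sub]
    exact (hA t ht (x - y)).le
  have hub : ‖u b‖ = 1 :=
    (norm_eq_of_inner_deriv_eq_zero hab hu fun t ht ↦ hA t ht (u t)).trans hua
  have hinit' : p a • ψ a - u a = 0 := by simp [p, hθa, hinit]
  calc buresDist ℂ (u b) (ψ b)
      = buresDist ℂ (u b) (p b • ψ b) := (buresDist_smul_right (hp b) _ _).symm
    _ ≤ ‖p b • ψ b - u b‖ := by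
        rw [norm_sub_rev]
        exact buresDist_le_norm_sub hub (by rw [norm_smul, hp, hψb, one_mul])
    _ ≤ ‖p a • ψ a - u a‖ + ∫ t in a..b, ‖f t‖ :=
        norm_sub_le_add_integral_of_dissipative hab hdiss hu hrot (by simpa only [hf] using hint)
    _ = ∫ t in a..b, ‖ψ' t - A t (ψ t) - (I * θ' t) • ψ t‖ := by
        simp only [hinit', norm_zero, zero_add, hf]

lemma re_inner_neg_I_div_smul_eq_zero {H : 𝓗 →ₗ[ℂ] 𝓗} (hH : H.IsSymmetric) (r : ℝ) (x : 𝓗) :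
    (⟪x, (-(I / (r : ℂ))) • H x⟫_ℂ).re = 0 := by
  have him : (⟪x, H x⟫_ℂ).im = 0 := hH.im_inner_self_apply x
  have hcoeff : -(I / (r : ℂ)) = (-r⁻¹ : ℝ) * I := by
    push_cast
    ring
  rw [inner_smul_right, hcoeff, mul_assoc, re_ofReal_mul, I_mul_re, him, neg_zero, mul_zero]

/-- The gradient error `e = v + (i/ħ)(H - E_x)x - i Im⟨x, v⟩ x` of a variational path that passes
through the state `x` with velocity `v`. -/
noncomputable def gradientError (H : 𝓗 →L[ℂ] 𝓗) (hbar : ℝ) (x v : 𝓗) : 𝓗 :=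
  v + (I / (hbar : ℂ)) • (H x - (energy H x : ℂ) • x) - (I * ((⟪x, v⟫_ℂ).im : ℂ)) • x

/-- The rate `E_x / ħ + Im⟨x, v⟩` at which the global phase of a path through `x` with velocity
`v` turns relative to the Schrödinger flow. -/
noncomputable def phaseRate (H : 𝓗 →L[ℂ] 𝓗) (hbar : ℝ) (x v : 𝓗) : ℝ :=
  energy H x / hbar + (⟪x, v⟫_ℂ).im

lemma gradientError_eq_sub_phaseRate_smul (H : 𝓗 →L[ℂ] 𝓗) (hbar : ℝ) (x v : 𝓗) :
    gradientError H hbar x v =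
      v - (-(I / (hbar : ℂ))) • H x - (I * phaseRate H hbar x v) • x := by
  rw [gradientError, phaseRate]
  push_cast
  module

lemma continuousOn_phaseRate {X : Type*} [TopologicalSpace X] {s : Set X} {H : X → 𝓗 →L[ℂ] 𝓗}
    {ψ ψ' : X → 𝓗} (hbar : ℝ) (hH : ContinuousOn H s) (hψ : ContinuousOn ψ s)
    (hψ' : ContinuousOn ψ' s) :
    ContinuousOn (fun t ↦ phaseRate (H t) hbar (ψ t) (ψ' t)) s :=
  ((continuous_re.comp_continuousOn (hψ.inner (hH.clm_apply hψ))).div_const hbar).add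
    (continuous_im.comp_continuousOn (hψ.inner hψ'))

theorem varqrte_error_bound_general (H : ℝ → 𝓗 →L[ℂ] 𝓗) (hbar T : ℝ) (_hhbar : hbar ≠ 0)
    (hT : 0 ≤ T) (ψs ψ ψ' : ℝ → 𝓗)
    (hH : ∀ t ∈ Icc 0 T, (H t : 𝓗 →ₗ[ℂ] 𝓗).IsSymmetric) (hHcont : ContinuousOn H (Icc 0 T))
    (hψs0 : ‖ψs 0‖ = 1)
    (hψsode : ∀ t ∈ Icc 0 T,
      HasDerivWithinAt ψs ((-(I / (hbar : ℂ))) • H t (ψs t)) (Icc 0 T) t)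
    (hψT : ‖ψ T‖ = 1) (hinit : ψ 0 = ψs 0)
    (hψder : ∀ t ∈ Icc 0 T, HasDerivWithinAt ψ (ψ' t) (Icc 0 T) t)
    (hψ'cont : ContinuousOn ψ' (Icc 0 T)) :
    buresDist ℂ (ψs T) (ψ T) ≤ ∫ t in 0..T, ‖gradientError (H t) hbar (ψ t) (ψ' t)‖ := by
  have hψcont : ContinuousOn ψ (Icc 0 T) := fun t ht ↦ (hψder t ht).continuousWithinAt
  have hrate := continuousOn_phaseRate hbar hHcont hψcont hψ'cont
  simp only [gradientError_eq_sub_phaseRate_smul]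
  refine buresDist_le_integral_of_skew (A := fun t ↦ (-(I / (hbar : ℂ))) • (H t : 𝓗 →ₗ[ℂ] 𝓗)) hT
    (fun t ht ↦ re_inner_neg_I_div_smul_eq_zero (hH t ht) hbar) hψsode hψder
    (fun t ht ↦ hasDerivWithinAt_integral_Icc hrate ht) (ContinuousOn.integrableOn_Icc ?_)
    intervalIntegral.integral_same hinit hψs0 hψT
  exact ((hψ'cont.sub ((hHcont.clm_apply hψcont).const_smul _)).sub
    ((continuousOn_const.mul (continuous_ofReal.comp_continuousOn hrate)).smul hψcont)).norm

end Complex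

/-- Theorem 2 (a posteriori error bound for variational quantum real time evolution):
if `ψ*` solves `ihbarψ̇* = Hψ*`, `ψ` is a C¹ path of unit vectors with the same initial state,
and `e_t := ψ̇_t + (i/hbar)(H − E_{ψ_t})ψ_t − i·Im⟨ψ_t, ψ̇_t⟩ψ_t`, then
`B(ψ*_T, ψ_T) ≤ ∫₀ᵀ ‖e_t‖ dt`. -/
theorem varqrte_error_bound {𝓗 : Type*} [NormedAddCommGroup 𝓗]
    [InnerProductSpace ℂ 𝓗] [FiniteDimensional ℂ 𝓗]
    (H : 𝓗 →L[ℂ] 𝓗) (hH : ∀ x y : 𝓗, ⟪H x, y⟫_ℂ = ⟪x, H y⟫_ℂ)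
    (hbar T : ℝ) (hhbar : 0 < hbar) (hT : 0 < T)
    (ψs ψ ψ' : ℝ → 𝓗)
    (hψs0 : ‖ψs 0‖ = 1)
    (hψsode : ∀ t ∈ Set.Icc (0 : ℝ) T,
      HasDerivAt ψs ((-(Complex.I / (hbar : ℂ))) • H (ψs t)) t)
    (hψunit : ∀ t ∈ Set.Icc (0 : ℝ) T, ‖ψ t‖ = 1)
    (hinit : ψ 0 = ψs 0)
    (hψder : ∀ t, HasDerivAt ψ (ψ' t) t) (hψ'cont : Continuous ψ')
    (e : ℝ → 𝓗)
    (he : ∀ t, e t = ψ' t +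
        (Complex.I / (hbar : ℂ)) • (H (ψ t) - (energy H (ψ t) : ℂ) • ψ t) -
        (Complex.I * ((⟪ψ t, ψ' t⟫_ℂ).im : ℂ)) • ψ t) :
    Real.sqrt (2 - 2 * ‖⟪ψs T, ψ T⟫_ℂ‖) ≤ ∫ t in (0 : ℝ)..T, ‖e t‖ := by
  obtain rfl : e = fun t ↦ gradientError H hbar (ψ t) (ψ' t) := funext he
  exact varqrte_error_bound_general (fun _ ↦ H) hbar T hhbar.ne' hT.le ψs ψ ψ' (fun _ _ ↦ hH)
    continuousOn_const hψs0 (fun t ht ↦ (hψsode t ht).hasDerivWithinAt)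
    (hψunit T (right_mem_Icc.mpr hT.le)) hinit (fun t _ ↦ (hψder t).hasDerivWithinAt)
    hψ'cont.continuousOn
end

section
/- (Optimal global-phase rate in variational quantum real time evolution.) Let H be a self-adjoint linear operator on 𝓗, let ħ > 0, let ψ be a unit vector with energy E = E_ψ, and let ψ̇ ∈ 𝓗. Then the function ν ↦ ‖iħψ̇ − (H − ħν)ψ‖² over ν ∈ ℝ attains its unique minimum at ν = E/ħ + Im⟨ψ, ψ̇⟩. -/
open scoped InnerProductSpace

/-!
Writing `v = Hψ − iħψ̇`, the residual has norm `‖v − ħνψ‖`, so `ħν` must be the coefficient of the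
orthogonal projection of `v` onto the real line `ℝψ`, for the real inner product `Re ⟪·, ·⟫`.
Since `Re ⟪ψ, −iħψ̇⟫ = ħ Im ⟪ψ, ψ̇⟫`, for a unit vector this coefficient is `E + ħ Im ⟪ψ, ψ̇⟫`.
-/

section RealCoefficient

variable {𝕜 E : Type*} [RCLike 𝕜] [NormedAddCommGroup E] [InnerProductSpace 𝕜 E]

lemma re_inner_sub_re_inner_div_smul_eq_zero (x v : E) :
    RCLike.re ⟪v - ((RCLike.re ⟪x, v⟫_𝕜 / ‖x‖ ^ 2 : ℝ) : 𝕜) • x, x⟫_𝕜 = 0 := by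
  obtain rfl | hx := eq_or_ne x 0
  · rw [inner_zero_right, map_zero]
  · rw [inner_re_symm, inner_sub_right, inner_smul_right, map_sub, RCLike.re_ofReal_mul,
      inner_self_eq_norm_sq, div_mul_cancel₀ _ (pow_ne_zero 2 (norm_ne_zero_iff.mpr hx)), sub_self]

lemma norm_sub_ofReal_smul_sq_eq_add (x v : E) (r : ℝ) :
    ‖v - (r : 𝕜) • x‖ ^ 2 =
      ‖v - ((RCLike.re ⟪x, v⟫_𝕜 / ‖x‖ ^ 2 : ℝ) : 𝕜) • x‖ ^ 2 +
        ((r - RCLike.re ⟪x, v⟫_𝕜 / ‖x‖ ^ 2) * ‖x‖) ^ 2 := by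
  have orthogonal := re_inner_sub_re_inner_div_smul_eq_zero (𝕜 := 𝕜) x v
  set r₀ := RCLike.re ⟪x, v⟫_𝕜 / ‖x‖ ^ 2
  have decomposition : v - (r : 𝕜) • x = (v - (r₀ : 𝕜) • x) - ((r - r₀ : ℝ) : 𝕜) • x := by
    rw [RCLike.ofReal_sub]
    module
  rw [decomposition, norm_sub_sq (𝕜 := 𝕜), inner_smul_right, RCLike.re_ofReal_mul, orthogonal,
    norm_smul, RCLike.norm_ofReal, mul_pow, sq_abs]
  ring

lemma norm_sub_re_inner_div_smul_lt {x : E} (hx : x ≠ 0) (v : E) {r : ℝ}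
    (hr : r ≠ RCLike.re ⟪x, v⟫_𝕜 / ‖x‖ ^ 2) :
    ‖v - ((RCLike.re ⟪x, v⟫_𝕜 / ‖x‖ ^ 2 : ℝ) : 𝕜) • x‖ < ‖v - (r : 𝕜) • x‖ := by
  refine lt_of_pow_lt_pow_left₀ 2 (norm_nonneg _) ?_
  rw [norm_sub_ofReal_smul_sq_eq_add x v r]
  exact lt_add_of_pos_right _
    (sq_pos_of_ne_zero (mul_ne_zero (sub_ne_zero.mpr hr) (norm_ne_zero_iff.mpr hx)))

end RealCoefficient

section PhaseRate

variable {𝓗 : Type*} [NormedAddCommGroup 𝓗] [InnerProductSpace ℂ 𝓗]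

lemma re_inner_sub_I_mul_ofReal_smul (ψ φ χ : 𝓗) (r : ℝ) :
    (⟪ψ, φ - (Complex.I * (r : ℂ)) • χ⟫_ℂ).re = (⟪ψ, φ⟫_ℂ).re + r * (⟪ψ, χ⟫_ℂ).im := by
  rw [inner_sub_right, inner_smul_right, Complex.sub_re, mul_assoc, Complex.I_mul_re,
    Complex.im_ofReal_mul, sub_neg_eq_add]

/-- Here `φ` stands for `Hψ`; normalizing by `‖ψ‖ ^ 2` replaces `⟪ψ, Hψ⟫` by the Rayleigh quotient
of `H` at `ψ`. -/
theorem varqrte_optimal_phase_rate_general {hbar : ℝ} (hhbar : hbar ≠ 0)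
    {ψ : 𝓗} (hψ : ψ ≠ 0) (φ ψd : 𝓗) {ν : ℝ}
    (hν : ν ≠ ((⟪ψ, φ⟫_ℂ).re / hbar + (⟪ψ, ψd⟫_ℂ).im) / ‖ψ‖ ^ 2) :
    ‖(Complex.I * (hbar : ℂ)) • ψd -
        (φ - ((hbar * (((⟪ψ, φ⟫_ℂ).re / hbar + (⟪ψ, ψd⟫_ℂ).im) / ‖ψ‖ ^ 2) : ℝ) : ℂ) • ψ)‖ ^ 2 <
      ‖(Complex.I * (hbar : ℂ)) • ψd - (φ - ((hbar * ν : ℝ) : ℂ) • ψ)‖ ^ 2 := by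
  set ν₀ := ((⟪ψ, φ⟫_ℂ).re / hbar + (⟪ψ, ψd⟫_ℂ).im) / ‖ψ‖ ^ 2 with hν₀
  set v := φ - (Complex.I * (hbar : ℂ)) • ψd with hv
  have residual_norm (c : ℝ) :
      ‖(Complex.I * (hbar : ℂ)) • ψd - (φ - (c : ℂ) • ψ)‖ = ‖v - (c : ℂ) • ψ‖ := by
    rw [norm_sub_rev, sub_right_comm]
  have optimal_coefficient : hbar * ν₀ = (⟪ψ, v⟫_ℂ).re / ‖ψ‖ ^ 2 := by
    rw [hv, re_inner_sub_I_mul_ofReal_smul, hν₀]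
    field_simp
  have not_optimal : hbar * ν ≠ (⟪ψ, v⟫_ℂ).re / ‖ψ‖ ^ 2 :=
    optimal_coefficient ▸ (mul_right_injective₀ hhbar).ne hν
  rw [residual_norm, residual_norm, optimal_coefficient]
  exact pow_lt_pow_left₀ (norm_sub_re_inner_div_smul_lt hψ v not_optimal) (norm_nonneg _)
    two_ne_zero

end PhaseRate

/-- Optimal global-phase rate in variational quantum real time evolution:
`ν ↦ ‖iħψ̇ − (H − ħν)ψ‖²` attains its unique minimum at `ν = E/ħ + Im⟨ψ, ψ̇⟩`. -/
theorem varqrte_optimal_phase_rate {𝓗 : Type*} [NormedAddCommGroup 𝓗]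
    [InnerProductSpace ℂ 𝓗] [FiniteDimensional ℂ 𝓗]
    (H : 𝓗 →L[ℂ] 𝓗) (hH : ∀ x y : 𝓗, ⟪H x, y⟫_ℂ = ⟪x, H y⟫_ℂ)
    (hbar : ℝ) (hhbar : 0 < hbar)
    (ψ : 𝓗) (hψ : ‖ψ‖ = 1) (ψd : 𝓗) :
    ∀ ν : ℝ, ν ≠ (⟪ψ, H ψ⟫_ℂ).re / hbar + (⟪ψ, ψd⟫_ℂ).im →
      ‖(Complex.I * (hbar : ℂ)) • ψd -
          (H ψ - ((hbar * ((⟪ψ, H ψ⟫_ℂ).re / hbar + (⟪ψ, ψd⟫_ℂ).im) : ℝ) : ℂ) • ψ)‖ ^ 2 <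
        ‖(Complex.I * (hbar : ℂ)) • ψd - (H ψ - ((hbar * ν : ℝ) : ℂ) • ψ)‖ ^ 2 := by
  intro ν hν
  have hψ₀ : ψ ≠ 0 := norm_ne_zero_iff.mp (hψ ▸ one_ne_zero)
  simpa only [hψ, one_pow, div_one] using varqrte_optimal_phase_rate_general hhbar.ne' hψ₀
    (H ψ) ψd (ν := ν) (by simpa only [hψ, one_pow, div_one] using hν)
end

section
/- (Expansion of the squared gradient-error norm for variational quantum real time evolution.) Let H be a self-adjoint linear operator on 𝓗, let ψ be a unit vector with E = E_ψ, and let ψ̇ ∈ 𝓗 satisfy Re⟨ψ, ψ̇⟩ = 0. Define e := ψ̇ + i(H − E)ψ − i·Im⟨ψ, ψ̇⟩ ψ. Then ‖e‖² = Var(H)_ψ + ‖ψ̇‖² − |⟨ψ, ψ̇⟩|² − 2·Im(⟨ψ̇, Hψ⟩ − E⟨ψ̇, ψ⟩). -/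
open scoped InnerProductSpace

/-!
If `⟪ψ, ψd⟫` is purely imaginary and `⟪ψ, H ψ⟫` is real, then the coefficients subtracted in the
gradient error are exactly those of the projection along `ψ`, so the error is `P (ψd + i H ψ)`
with `P` the orthogonal projection onto `ψᗮ`. Hence its squared norm is
`‖P ψd‖² + ‖P (H ψ)‖² - 2 Im ⟪P ψd, P (H ψ)⟫`, and each of the three terms is evaluated by
`⟪P x, P y⟫ = ⟪x, y⟫ - ⟪x, ψ⟫ ⟪ψ, y⟫`; the middle one is the energy variance.
-/

section UnitVector

variable {𝕜 E : Type*} [RCLike 𝕜] [NormedAddCommGroup E] [InnerProductSpace 𝕜 E] {ψ : E}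

theorem starProjection_orthogonal_unit_singleton (hψ : ‖ψ‖ = 1) (x : E) :
    (𝕜 ∙ ψ)ᗮ.starProjection x = x - ⟪ψ, x⟫_𝕜 • ψ := by
  rw [Submodule.starProjection_orthogonal_val, Submodule.starProjection_unit_singleton 𝕜 hψ]

theorem inner_starProjection_orthogonal_unit_singleton (hψ : ‖ψ‖ = 1) (x y : E) :
    ⟪(𝕜 ∙ ψ)ᗮ.starProjection x, (𝕜 ∙ ψ)ᗮ.starProjection y⟫_𝕜 =
      ⟪x, y⟫_𝕜 - ⟪x, ψ⟫_𝕜 * ⟪ψ, y⟫_𝕜 := by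
  have idem : (𝕜 ∙ ψ)ᗮ.starProjection ((𝕜 ∙ ψ)ᗮ.starProjection y) =
      (𝕜 ∙ ψ)ᗮ.starProjection y :=
    Submodule.starProjection_eq_self_iff.mpr (Submodule.starProjection_apply_mem _ y)
  rw [Submodule.inner_starProjection_left_eq_right, idem,
    starProjection_orthogonal_unit_singleton hψ, inner_sub_right, inner_smul_right, mul_comm]

theorem norm_starProjection_orthogonal_unit_singleton_sq (hψ : ‖ψ‖ = 1) (x : E) :
    ‖(𝕜 ∙ ψ)ᗮ.starProjection x‖ ^ 2 = ‖x‖ ^ 2 - ‖⟪ψ, x⟫_𝕜‖ ^ 2 := by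
  rw [← inner_self_eq_norm_sq (𝕜 := 𝕜), inner_starProjection_orthogonal_unit_singleton hψ,
    map_sub, inner_self_eq_norm_sq, inner_mul_symm_re_eq_norm, norm_mul, norm_inner_symm x ψ,
    sq ‖⟪ψ, x⟫_𝕜‖]

theorem norm_starProjection_orthogonal_apply_sq_eq_variance {T : E →ₗ[𝕜] E} (hT : T.IsSymmetric)
    (hψ : ‖ψ‖ = 1) :
    ‖(𝕜 ∙ ψ)ᗮ.starProjection (T ψ)‖ ^ 2 =
      RCLike.re ⟪ψ, T (T ψ)⟫_𝕜 - RCLike.re ⟪ψ, T ψ⟫_𝕜 ^ 2 := by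
  have second_moment : ‖T ψ‖ ^ 2 = RCLike.re ⟪ψ, T (T ψ)⟫_𝕜 := by
    rw [← hT ψ (T ψ), inner_self_eq_norm_sq]
  have energy_sq : ‖⟪ψ, T ψ⟫_𝕜‖ ^ 2 = RCLike.re ⟪ψ, T ψ⟫_𝕜 ^ 2 := by
    rw [← hT.coe_re_inner_self_apply ψ, RCLike.norm_ofReal, RCLike.ofReal_re, sq_abs]
  rw [norm_starProjection_orthogonal_unit_singleton_sq hψ, second_moment, energy_sq]

end UnitVector

theorem norm_add_I_smul_sq {E : Type*} [SeminormedAddCommGroup E] [InnerProductSpace ℂ E]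
    (x y : E) : ‖x + Complex.I • y‖ ^ 2 = ‖x‖ ^ 2 + ‖y‖ ^ 2 - 2 * (⟪x, y⟫_ℂ).im := by
  rw [norm_add_sq (𝕜 := ℂ), inner_smul_right, norm_smul, Complex.norm_I, one_mul,
    RCLike.re_eq_complex_re, Complex.I_mul_re]
  ring

section GradientError

variable {𝓗 : Type*} [NormedAddCommGroup 𝓗] [InnerProductSpace ℂ 𝓗] {H : 𝓗 →ₗ[ℂ] 𝓗} {ψ ψd : 𝓗}

theorem gradient_error_eq_starProjection (hH : H.IsSymmetric) (hψ : ‖ψ‖ = 1)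
    (hre : (⟪ψ, ψd⟫_ℂ).re = 0) :
    ψd + Complex.I • (H ψ - ((⟪ψ, H ψ⟫_ℂ).re : ℂ) • ψ) -
        (Complex.I * ((⟪ψ, ψd⟫_ℂ).im : ℂ)) • ψ =
      (ℂ ∙ ψ)ᗮ.starProjection (ψd + Complex.I • H ψ) := by
  have energy_real : ((⟪ψ, H ψ⟫_ℂ).re : ℂ) = ⟪ψ, H ψ⟫_ℂ := hH.coe_re_inner_self_apply ψ
  have overlap_imaginary : Complex.I * ((⟪ψ, ψd⟫_ℂ).im : ℂ) = ⟪ψ, ψd⟫_ℂ := by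
    apply Complex.ext <;> simp [hre]
  rw [energy_real, overlap_imaginary, map_add, map_smul,
    starProjection_orthogonal_unit_singleton hψ, starProjection_orthogonal_unit_singleton hψ]
  abel

theorem varqrte_gradient_error_sq_general (hH : H.IsSymmetric) (hψ : ‖ψ‖ = 1)
    (hre : (⟪ψ, ψd⟫_ℂ).re = 0) :
    ‖ψd + Complex.I • (H ψ - ((⟪ψ, H ψ⟫_ℂ).re : ℂ) • ψ) -
        (Complex.I * ((⟪ψ, ψd⟫_ℂ).im : ℂ)) • ψ‖ ^ 2 =
      ((⟪ψ, H (H ψ)⟫_ℂ).re - (⟪ψ, H ψ⟫_ℂ).re ^ 2) + ‖ψd‖ ^ 2 - ‖⟪ψ, ψd⟫_ℂ‖ ^ 2 -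
        2 * (⟪ψd, H ψ⟫_ℂ - (((⟪ψ, H ψ⟫_ℂ).re : ℂ)) * ⟪ψd, ψ⟫_ℂ).im := by
  let P := (ℂ ∙ ψ)ᗮ.starProjection
  have variance : ‖P (H ψ)‖ ^ 2 = (⟪ψ, H (H ψ)⟫_ℂ).re - (⟪ψ, H ψ⟫_ℂ).re ^ 2 :=
    norm_starProjection_orthogonal_apply_sq_eq_variance hH hψ
  have velocity : ‖P ψd‖ ^ 2 = ‖ψd‖ ^ 2 - ‖⟪ψ, ψd⟫_ℂ‖ ^ 2 :=
    norm_starProjection_orthogonal_unit_singleton_sq hψ ψd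
  have energy_real : ((⟪ψ, H ψ⟫_ℂ).re : ℂ) = ⟪ψ, H ψ⟫_ℂ := hH.coe_re_inner_self_apply ψ
  have cross : ⟪P ψd, P (H ψ)⟫_ℂ = ⟪ψd, H ψ⟫_ℂ - ((⟪ψ, H ψ⟫_ℂ).re : ℂ) * ⟪ψd, ψ⟫_ℂ := by
    rw [energy_real, inner_starProjection_orthogonal_unit_singleton hψ, mul_comm]
  rw [gradient_error_eq_starProjection hH hψ hre, map_add, map_smul, norm_add_I_smul_sq,
    variance, velocity, cross]
  ring

end GradientError

/-- Expansion of the squared gradient-error norm for variational quantum real time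
evolution: with `e = ψ̇ + i(H − E)ψ − i·Im⟨ψ, ψ̇⟩ψ` and `Re⟨ψ, ψ̇⟩ = 0`,
`‖e‖² = Var(H)_ψ + ‖ψ̇‖² − |⟨ψ, ψ̇⟩|² − 2Im(⟨ψ̇, Hψ⟩ − E⟨ψ̇, ψ⟩)`. -/
theorem varqrte_gradient_error_sq {𝓗 : Type*} [NormedAddCommGroup 𝓗]
    [InnerProductSpace ℂ 𝓗] [FiniteDimensional ℂ 𝓗]
    (H : 𝓗 →L[ℂ] 𝓗) (hH : ∀ x y : 𝓗, ⟪H x, y⟫_ℂ = ⟪x, H y⟫_ℂ)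
    (ψ ψd : 𝓗) (hψ : ‖ψ‖ = 1) (hre : (⟪ψ, ψd⟫_ℂ).re = 0) :
    ‖ψd + Complex.I • (H ψ - ((⟪ψ, H ψ⟫_ℂ).re : ℂ) • ψ) -
        (Complex.I * ((⟪ψ, ψd⟫_ℂ).im : ℂ)) • ψ‖ ^ 2 =
      ((⟪ψ, H (H ψ)⟫_ℂ).re - (⟪ψ, H ψ⟫_ℂ).re ^ 2) + ‖ψd‖ ^ 2 - ‖⟪ψ, ψd⟫_ℂ‖ ^ 2 -
        2 * (⟪ψd, H ψ⟫_ℂ - (((⟪ψ, H ψ⟫_ℂ).re : ℂ)) * ⟪ψd, ψ⟫_ℂ).im :=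
  varqrte_gradient_error_sq_general (H := H.toLinearMap) hH hψ hre
end
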